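/- (Claim 7: strong converse part of Theorem 8, common-message BC.) For every rate triple (R, R_𝒴, R_𝒵) ∈ [0,∞)³, all positive constants λ₁^𝒴, λ₂^𝒴, λ₁^𝒵, λ₂^𝒵 with λ₁^𝒴 + λ₂^𝒴 + λ₁^𝒵 + λ₂^𝒵 < 1, and every ε > 0, there exists η₀ ∈ ℕ such that for every blocklength n ≥ η₀ and all finite sets ℳ, ℳ_𝒴, ℳ_𝒵 with |ℳ| = ⌈exp(exp(nR))⌉, |ℳ_𝒴| = ⌈exp(exp(n R_𝒴))⌉, |ℳ_𝒵| = ⌈exp(exp(n R_𝒵))⌉, a necessary condition for an (n, ℳ, ℳ_𝒴, ℳ_𝒵, λ₁^𝒴, λ₂^𝒴, λ₁^𝒵, λ₂^𝒵) average-error ID code for the BC W(y,z|x) with a common message to exist is that for some PMF P on 𝒳: R < I(P, W_𝒴) + ε, R_𝒴 < I(P, W_𝒴) + ε, R < I(P, W_𝒵) + ε, and R_𝒵 < I(P, W_𝒵) + ε. -/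

import Mathlib

open scoped Classical
open Finset

noncomputable section

/-- `P` is a probability mass function on the finite type `X`. -/
def IsPMF {X : Type*} [Fintype X] (P : X → ℝ) : Prop :=
  (∀ x, 0 ≤ P x) ∧ ∑ x, P x = 1

/-- `W` is a (discrete memoryless) channel from `X` to `Y`. -/
def IsChannel {X Y : Type*} [Fintype Y] (W : X → Y → ℝ) : Prop :=
  (∀ x y, 0 ≤ W x y) ∧ ∀ x, ∑ y, W x y = 1

/-- The `n`-fold memoryless extension `W^n(𝐲|𝐱) = ∏ᵢ W(yᵢ|xᵢ)`. -/
def Wn {X Y : Type*} (W : X → Y → ℝ) (n : ℕ) (x : Fin n → X) (y : Fin n → Y) : ℝ :=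
  ∏ i, W (x i) (y i)

/-- Mutual information `I(P,W)` (natural logarithm), with the convention that
terms with `P x * W x y = 0` contribute `0`. -/
def mutInf {X Y : Type*} [Fintype X] [Fintype Y] (P : X → ℝ) (W : X → Y → ℝ) : ℝ :=
  ∑ x, ∑ y, if P x * W x y = 0 then 0
    else P x * W x y * Real.log (W x y / ∑ x', P x' * W x' y)

/-- The error requirements of an `(n, M, l1, l2)` ID code for the DMC `W`:
maximum probability of missed identification at most `l1`, maximum probability
of wrong identification at most `l2`. -/
def IDCodeErr {X Y M : Type*} [Fintype X] [Fintype Y]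
    (n : ℕ) (W : X → Y → ℝ) (Q : M → (Fin n → X) → ℝ)
    (D : M → Finset (Fin n → Y)) (l1 l2 : ℝ) : Prop :=
  (∀ m, ∑ x, Q m x * ∑ y ∈ (D m)ᶜ, Wn W n x y ≤ l1) ∧
  (∀ m m', m ≠ m' → ∑ x, Q m x * ∑ y ∈ D m', Wn W n x y ≤ l2)

/-- `(n, M, l1, l2)` ID code for the DMC `W`. -/
def IsIDCode {X Y M : Type*} [Fintype X] [Fintype Y]
    (n : ℕ) (W : X → Y → ℝ) (Q : M → (Fin n → X) → ℝ)
    (D : M → Finset (Fin n → Y)) (l1 l2 : ℝ) : Prop :=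
  (∀ m, IsPMF (Q m)) ∧ IDCodeErr n W Q D l1 l2

/-- `W` is a two-receiver broadcast channel from `X` to `Y × Z`. -/
def IsBC {X Y Z : Type*} [Fintype Y] [Fintype Z] (W : X → Y → Z → ℝ) : Prop :=
  (∀ x y z, 0 ≤ W x y z) ∧ ∀ x, ∑ y, ∑ z, W x y z = 1

/-- Marginal channel to terminal `Y`. -/
def margY {X Y Z : Type*} [Fintype Z] (W : X → Y → Z → ℝ) : X → Y → ℝ :=
  fun x y => ∑ z, W x y z

/-- Marginal channel to terminal `Z`. -/
def margZ {X Y Z : Type*} [Fintype Y] (W : X → Y → Z → ℝ) : X → Z → ℝ :=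
  fun x z => ∑ y, W x y z

/-- Average-error ID code for the BC with a common message: each receiver
identifies the pair (common message, its private message) jointly; the mixture
codes, averaged over the other receiver's private message and indexed by the
corresponding pairs, are ID codes for the marginal channels. -/
def IsCMIDCode {X Y Z : Type*} [Fintype X] [Fintype Y] [Fintype Z]
    (n k kY kZ : ℕ) (W : X → Y → Z → ℝ)
    (Q : Fin k → Fin kY → Fin kZ → (Fin n → X) → ℝ)
    (DY : Fin k → Fin kY → Finset (Fin n → Y))
    (DZ : Fin k → Fin kZ → Finset (Fin n → Z))
    (l1Y l2Y l1Z l2Z : ℝ) : Prop :=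
  (∀ m my mz, IsPMF (Q m my mz)) ∧
  IDCodeErr n (margY W)
    (fun p : Fin k × Fin kY => fun x => (kZ : ℝ)⁻¹ * ∑ mz, Q p.1 p.2 mz x)
    (fun p : Fin k × Fin kY => DY p.1 p.2) l1Y l2Y ∧
  IDCodeErr n (margZ W)
    (fun p : Fin k × Fin kZ => fun x => (kY : ℝ)⁻¹ * ∑ my, Q p.1 my p.2 x)
    (fun p : Fin k × Fin kZ => DZ p.1 p.2) l1Z l2Z

/-!
A receiver sees the input only through the channel output, and output distributions are cheap to
simulate: if `q` is a distribution on `𝒳ⁿ` supported on sequences whose types `P` satisfy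
`I(P, W) ≤ a`, then about `exp (n a)` random samples of `q` have, on average, nearly the same output
distribution as `q` (soft covering). The messages of an identification code have pairwise
distinguishable output distributions, so those that put mass noticeably more than `λ₁ + λ₂` on such
sequences are outnumbered by the `|𝒳| ^ (n exp (n a))` codebooks of this size. For `a = R - ε` this
is negligible compared with `exp (exp (n R))`, and hence the input distribution averaged over all
messages gives mass at most about `λ₁ + λ₂` to the sequences that are bad for the receiver. For two
receivers the bad masses add up to less than one, and the type of a sequence which is bad for
neither receiver is the desired `P`.
-/

open Real Filter Topology

/-- The mixture of the distributions `Q i` with uniform weights, which models the average over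
messages. -/
def uniformMixture {ι A : Type*} [Fintype ι] (Q : ι → A → ℝ) (a : A) : ℝ :=
  (Fintype.card ι : ℝ)⁻¹ * ∑ i, Q i a

lemma sum_uniformMixture {ι A : Type*} [Fintype ι] (Q : ι → A → ℝ) (s : Finset A) :
    ∑ a ∈ s, uniformMixture Q a = (Fintype.card ι : ℝ)⁻¹ * ∑ i, ∑ a ∈ s, Q i a := by
  simp only [uniformMixture]
  rw [← mul_sum, sum_comm]

namespace IsPMF

variable {ι A : Type*} [Fintype ι] [Fintype A] {p : A → ℝ}

lemma sum_le_one (hp : IsPMF p) (s : Finset A) : ∑ a ∈ s, p a ≤ 1 :=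
  (sum_le_univ_sum_of_nonneg hp.1).trans_eq hp.2

lemma le_one (hp : IsPMF p) (a : A) : p a ≤ 1 := by
  simpa using hp.sum_le_one {a}

lemma exists_notMem_notMem (hp : IsPMF p) {s t : Finset A}
    (hst : ∑ a ∈ s, p a + ∑ a ∈ t, p a < 1) : ∃ a, a ∉ s ∧ a ∉ t := by
  by_contra! hcover
  have hunion : s ∪ t = univ :=
    eq_univ_iff_forall.mpr fun a => mem_union.mpr (or_iff_not_imp_left.mpr (hcover a))
  have hsum := sum_union_inter (s₁ := s) (s₂ := t) (f := p)
  rw [hunion, hp.2] at hsum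
  linarith [sum_nonneg fun a (_ : a ∈ s ∩ t) => hp.1 a]

lemma exists_le_of_sum_mul_le (hp : IsPMF p) {f : A → ℝ} {c : ℝ} (h : ∑ a, p a * f a ≤ c) :
    ∃ a, p a ≠ 0 ∧ f a ≤ c := by
  by_contra! hlt
  obtain ⟨a₀, -, ha₀⟩ : ∃ a ∈ univ, p a ≠ 0 :=
    exists_ne_zero_of_sum_ne_zero (hp.2.trans_ne one_ne_zero)
  refine h.not_gt ?_
  calc c = ∑ a, p a * c := by rw [← sum_mul, hp.2, one_mul]
    _ < ∑ a, p a * f a := by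
      refine sum_lt_sum (fun a _ => ?_)
        ⟨a₀, mem_univ _, mul_lt_mul_of_pos_left (hlt a₀ ha₀) ((hp.1 a₀).lt_of_ne' ha₀)⟩
      rcases eq_or_ne (p a) 0 with ha | ha
      · simp [ha]
      · exact mul_le_mul_of_nonneg_left (hlt a ha).le (hp.1 a)

lemma exists_conditional (hp : IsPMF p) {s : Finset A} {c : ℝ} (hc : 0 < c)
    (hs : c ≤ ∑ a ∈ s, p a) :
    ∃ q : A → ℝ, IsPMF q ∧ (∀ a, q a ≠ 0 → a ∈ s) ∧ ∀ a, q a ≤ p a / c := by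
  have hspos : 0 < ∑ a ∈ s, p a := hc.trans_le hs
  refine ⟨fun a => if a ∈ s then p a / ∑ b ∈ s, p b else 0, ⟨fun a => ?_, ?_⟩, fun a ha => ?_,
    fun a => ?_⟩
  · dsimp only
    split_ifs
    exacts [div_nonneg (hp.1 a) hspos.le, le_rfl]
  · rw [sum_ite_mem, univ_inter, ← sum_div, div_self hspos.ne']
  · by_contra has
    exact ha (if_neg has)
  · dsimp only
    split_ifs
    exacts [div_le_div_of_nonneg_left (hp.1 a) hc hs, div_nonneg (hp.1 a) hc.le]

lemma uniformMixture [Nonempty ι] {Q : ι → A → ℝ} (hQ : ∀ i, IsPMF (Q i)) :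
    IsPMF (uniformMixture Q) := by
  refine ⟨fun a => mul_nonneg (by positivity) (sum_nonneg fun i _ => (hQ i).1 a), ?_⟩
  simp [sum_uniformMixture, fun i => (hQ i).2]

lemma pi [DecidableEq ι] {p : ι → A → ℝ} (hp : ∀ i, IsPMF (p i)) :
    IsPMF fun a : ι → A => ∏ i, p i (a i) := by
  refine ⟨fun a => prod_nonneg fun i _ => (hp i).1 _, ?_⟩
  rw [← Fintype.prod_sum p]
  exact prod_eq_one fun i _ => (hp i).2

lemma sum_mul_sub_mean (hp : IsPMF p) (f : A → ℝ) :
    ∑ a, p a * (f a - ∑ b, p b * f b) = 0 := by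
  simp_rw [mul_sub, sum_sub_distrib, ← sum_mul, hp.2, one_mul, sub_self]

lemma sum_mul_sub_mean_sq_le (hp : IsPMF p) (f : A → ℝ) :
    ∑ a, p a * (f a - ∑ b, p b * f b) ^ 2 ≤ ∑ a, p a * f a ^ 2 := by
  generalize hμ : ∑ b, p b * f b = μ
  have hvariance : ∑ a, p a * (f a - μ) ^ 2 = ∑ a, p a * f a ^ 2 - μ ^ 2 := by
    calc ∑ a, p a * (f a - μ) ^ 2
        = ∑ a, p a * f a ^ 2 - 2 * μ * ∑ a, p a * f a + μ ^ 2 * ∑ a, p a := by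
          rw [mul_sum, mul_sum, ← sum_sub_distrib, ← sum_add_distrib]
          exact sum_congr rfl fun a _ => by ring
      _ = ∑ a, p a * f a ^ 2 - μ ^ 2 := by rw [hp.2, hμ]; ring
  linarith [sq_nonneg μ]

lemma sum_mul_abs_le_sqrt (hp : IsPMF p) (f : A → ℝ) :
    ∑ a, p a * |f a| ≤ √(∑ a, p a * f a ^ 2) := by
  calc ∑ a, p a * |f a| = ∑ a, √(p a) * √(p a * f a ^ 2) :=
        sum_congr rfl fun a _ => by
          rw [sqrt_mul (hp.1 a), sqrt_sq_eq_abs, ← mul_assoc, mul_self_sqrt (hp.1 a)]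
    _ ≤ √(∑ a, p a) * √(∑ a, p a * f a ^ 2) :=
        sum_sqrt_mul_sqrt_le _ hp.1 fun a => mul_nonneg (hp.1 a) (sq_nonneg _)
    _ = √(∑ a, p a * f a ^ 2) := by rw [hp.2, sqrt_one, one_mul]

section Product

variable [DecidableEq ι] {p : ι → A → ℝ}

lemma sum_pi_mul_mul_of_centered (hp : ∀ i, IsPMF (p i)) {g : ι → A → ℝ}
    (hg : ∀ i, ∑ a, p i a * g i a = 0) (i j : ι) :
    ∑ a : ι → A, (∏ l, p l (a l)) * (g i (a i) * g j (a j)) =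
      if i = j then ∑ a, p i a * g i a ^ 2 else 0 := by
  let F : ι → A → ℝ := fun l b =>
    p l b * ((if l = i then g l b else 1) * (if l = j then g l b else 1))
  have hfactor : ∀ a : ι → A,
      (∏ l, p l (a l)) * (g i (a i) * g j (a j)) = ∏ l, F l (a l) := by
    intro a
    simp only [F, prod_mul_distrib, prod_ite_eq', mem_univ, if_true]
  rw [sum_congr rfl fun a _ => hfactor a, ← Fintype.prod_sum F]
  split_ifs with hij
  · subst hij
    rw [prod_eq_single i (fun l _ hl => by simp [F, hl, (hp l).2]) (by simp)]
    simp [F, sq]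
  · exact prod_eq_zero (mem_univ i) (by simp [F, hij, hg])

lemma sum_pi_mul_sq_sum_of_centered (hp : ∀ i, IsPMF (p i)) {g : ι → A → ℝ}
    (hg : ∀ i, ∑ a, p i a * g i a = 0) :
    ∑ a : ι → A, (∏ i, p i (a i)) * (∑ i, g i (a i)) ^ 2 = ∑ i, ∑ a, p i a * g i a ^ 2 := by
  calc ∑ a : ι → A, (∏ i, p i (a i)) * (∑ i, g i (a i)) ^ 2
      = ∑ i, ∑ j, ∑ a : ι → A, (∏ l, p l (a l)) * (g i (a i) * g j (a j)) := by
        simp_rw [sq, sum_mul_sum, mul_sum]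
        rw [sum_comm]
        exact sum_congr rfl fun i _ => sum_comm
    _ = ∑ i, ∑ a, p i a * g i a ^ 2 := by simp [sum_pi_mul_mul_of_centered hp hg]

lemma variance_sum_pi_le (hp : ∀ i, IsPMF (p i)) (g : ι → A → ℝ) :
    ∑ a : ι → A, (∏ i, p i (a i)) * (∑ i, g i (a i) - ∑ i, ∑ b, p i b * g i b) ^ 2 ≤
      ∑ i, ∑ a, p i a * g i a ^ 2 := by
  simp_rw [← sum_sub_distrib]
  rw [sum_pi_mul_sq_sum_of_centered hp (g := fun i b => g i b - ∑ c, p i c * g i c)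
    fun i => (hp i).sum_mul_sub_mean (g i)]
  exact sum_le_sum fun i _ => (hp i).sum_mul_sub_mean_sq_le (g i)

end Product

lemma chebyshev_pi {p : ι → A → ℝ} (hp : ∀ i, IsPMF (p i)) (g : ι → A → ℝ) {t : ℝ} (ht : 0 < t)
    {s : Finset (ι → A)} (hs : ∀ a ∈ s, (∑ i, ∑ b, p i b * g i b) + t ≤ ∑ i, g i (a i)) :
    ∑ a ∈ s, ∏ i, p i (a i) ≤ (∑ i, ∑ a, p i a * g i a ^ 2) / t ^ 2 := by
  classical
  have hw : ∀ a : ι → A, 0 ≤ ∏ i, p i (a i) := fun a => prod_nonneg fun i _ => (hp i).1 _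
  rw [le_div_iff₀ (by positivity), sum_mul]
  calc ∑ a ∈ s, (∏ i, p i (a i)) * t ^ 2
      ≤ ∑ a ∈ s, (∏ i, p i (a i)) * (∑ i, g i (a i) - ∑ i, ∑ b, p i b * g i b) ^ 2 := by
        refine sum_le_sum fun a ha => mul_le_mul_of_nonneg_left ?_ (hw a)
        exact pow_le_pow_left₀ ht.le (by linarith [hs a ha]) 2
    _ ≤ ∑ a : ι → A, (∏ i, p i (a i)) * (∑ i, g i (a i) - ∑ i, ∑ b, p i b * g i b) ^ 2 :=
        sum_le_univ_sum_of_nonneg fun a => mul_nonneg (hw a) (sq_nonneg _)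
    _ ≤ ∑ i, ∑ a, p i a * g i a ^ 2 := variance_sum_pi_le hp g

lemma variance_empirical_mean_le (hp : IsPMF p) (f : A → ℝ) {K : ℕ} (hK : K ≠ 0) :
    ∑ a : Fin K → A, (∏ i, p (a i)) * ((K : ℝ)⁻¹ * ∑ i, f (a i) - ∑ b, p b * f b) ^ 2 ≤
      (K : ℝ)⁻¹ * ∑ b, p b * f b ^ 2 := by
  have hvar := variance_sum_pi_le (p := fun _ : Fin K => p) (fun _ => hp) fun _ => f
  simp only [sum_const, card_univ, Fintype.card_fin, nsmul_eq_mul] at hvar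
  calc ∑ a : Fin K → A, (∏ i, p (a i)) * ((K : ℝ)⁻¹ * ∑ i, f (a i) - ∑ b, p b * f b) ^ 2
      = (K : ℝ)⁻¹ ^ 2 *
          ∑ a : Fin K → A, (∏ i, p (a i)) * (∑ i, f (a i) - K * ∑ b, p b * f b) ^ 2 := by
        rw [mul_sum]
        refine sum_congr rfl fun a _ => ?_
        rw [mul_left_comm, ← mul_pow, mul_sub, inv_mul_cancel_left₀ (Nat.cast_ne_zero.mpr hK)]
    _ ≤ (K : ℝ)⁻¹ ^ 2 * (K * ∑ b, p b * f b ^ 2) := by gcongr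
    _ = (K : ℝ)⁻¹ * ∑ b, p b * f b ^ 2 := by field_simp

end IsPMF

/-- The output distribution `pV` of the channel `V` for the input distribution `p`. The kernel `V`
need not be normalised. -/
def outputDist {A O : Type*} [Fintype A] (p : A → ℝ) (V : A → O → ℝ) (y : O) : ℝ :=
  ∑ a, p a * V a y

lemma sum_outputDist {A O : Type*} [Fintype A] (p : A → ℝ) (V : A → O → ℝ) (s : Finset O) :
    ∑ y ∈ s, outputDist p V y = ∑ a, p a * ∑ y ∈ s, V a y := by
  simp_rw [outputDist, mul_sum]
  exact sum_comm

section Truncation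

variable {A O : Type*}

/-- The part of the kernel `V` which is bounded by `b`; the rest of the mass is discarded, so that
this is only a sub-channel. -/
def truncatedKernel (V : A → O → ℝ) (b : O → ℝ) (a : A) (y : O) : ℝ :=
  if V a y ≤ b y then V a y else 0

lemma truncatedKernel_nonneg {V : A → O → ℝ} (hV : ∀ a y, 0 ≤ V a y) (b : O → ℝ) (a : A) (y : O) :
    0 ≤ truncatedKernel V b a y := by
  unfold truncatedKernel
  split_ifs
  exacts [hV a y, le_rfl]

lemma truncatedKernel_le {V : A → O → ℝ} (hV : ∀ a y, 0 ≤ V a y) (b : O → ℝ) (a : A) (y : O) :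
    truncatedKernel V b a y ≤ V a y := by
  unfold truncatedKernel
  split_ifs
  exacts [le_rfl, hV a y]

lemma truncatedKernel_le_bound (V : A → O → ℝ) {b : O → ℝ} (hb : ∀ y, 0 ≤ b y) (a : A) (y : O) :
    truncatedKernel V b a y ≤ b y := by
  unfold truncatedKernel
  split_ifs with h
  exacts [h, hb y]

lemma sum_le_sum_truncatedKernel_add [Fintype O] {V : A → O → ℝ} (hV : ∀ a y, 0 ≤ V a y)
    (b : O → ℝ) (a : A) (E : Finset O) :
    ∑ y ∈ E, V a y ≤ ∑ y ∈ E, truncatedKernel V b a y + ∑ y with b y < V a y, V a y := by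
  have hdefect : ∑ y ∈ E, (V a y - truncatedKernel V b a y) ≤
      ∑ y, (V a y - truncatedKernel V b a y) :=
    sum_le_univ_sum_of_nonneg fun y => sub_nonneg.mpr (truncatedKernel_le hV b a y)
  have htail : ∑ y, (V a y - truncatedKernel V b a y) = ∑ y with b y < V a y, V a y := by
    simp_rw [sum_filter, truncatedKernel, ← not_le]
    exact sum_congr rfl fun y _ => by split_ifs <;> simp
  rw [sum_sub_distrib] at hdefect
  linarith

end Truncation

section OneShot

variable {A O : Type*} [Fintype A]

lemma IsPMF.sum_mul_abs_average_sub_outputDist_le {p : A → ℝ} (hp : IsPMF p) {U : A → O → ℝ}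
    {y : O} (hU : ∀ a, 0 ≤ U a y) {B : ℝ} (hB : 0 ≤ B) (hUB : ∀ a, U a y ≤ B) {K : ℕ}
    (hK : K ≠ 0) :
    ∑ c : Fin K → A, (∏ i, p (c i)) * |(K : ℝ)⁻¹ * ∑ i, U (c i) y - outputDist p U y| ≤
      √(B / K) * √(outputDist p U y) := by
  have hsecond : ∑ a, p a * U a y ^ 2 ≤ B * outputDist p U y := by
    rw [outputDist, mul_sum]
    refine sum_le_sum fun a _ => ?_
    calc p a * U a y ^ 2 = U a y * (p a * U a y) := by ring
      _ ≤ B * (p a * U a y) :=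
        mul_le_mul_of_nonneg_right (hUB a) (mul_nonneg (hp.1 a) (hU a))
  refine ((IsPMF.pi fun _ : Fin K => hp).sum_mul_abs_le_sqrt _).trans ?_
  rw [← sqrt_mul (by positivity)]
  refine sqrt_le_sqrt ((hp.variance_empirical_mean_le (fun a => U a y) hK).trans ?_)
  calc (K : ℝ)⁻¹ * ∑ a, p a * U a y ^ 2 ≤ (K : ℝ)⁻¹ * (B * outputDist p U y) := by gcongr
    _ = B / K * outputDist p U y := by ring

variable [Fintype O]

/-- Soft covering: `K` independent samples from `p` work on average. -/
lemma IsPMF.exists_soft_covering {p : A → ℝ} (hp : IsPMF p) {U : A → O → ℝ}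
    (hU : ∀ a y, 0 ≤ U a y) (hU_sum : ∀ a, ∑ y, U a y ≤ 1) {r : O → ℝ} (hr : ∀ y, 0 ≤ r y)
    {L : ℝ} (hL : 0 ≤ L) (hUr : ∀ a y, U a y ≤ L * r y) {K : ℕ} (hK : K ≠ 0) :
    ∃ c : Fin K → A, (∀ i, p (c i) ≠ 0) ∧
      ∑ y, |(K : ℝ)⁻¹ * ∑ i, U (c i) y - outputDist p U y| ≤ √(L * (∑ y, r y) / K) := by
  have hLr : ∀ y, 0 ≤ L * r y := fun y => mul_nonneg hL (hr y)
  have hmass : ∑ y, outputDist p U y ≤ 1 := by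
    rw [sum_outputDist, ← hp.2]
    exact sum_le_sum fun a _ => mul_le_of_le_one_right (hp.1 a) (hU_sum a)
  have hmean : ∑ c : Fin K → A, (∏ i, p (c i)) *
      ∑ y, |(K : ℝ)⁻¹ * ∑ i, U (c i) y - outputDist p U y| ≤ √(L * (∑ y, r y) / K) := by
    calc ∑ c : Fin K → A, (∏ i, p (c i)) *
          ∑ y, |(K : ℝ)⁻¹ * ∑ i, U (c i) y - outputDist p U y|
        = ∑ y, ∑ c : Fin K → A, (∏ i, p (c i)) *
          |(K : ℝ)⁻¹ * ∑ i, U (c i) y - outputDist p U y| := by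
          simp_rw [mul_sum (s := univ (α := O))]
          exact sum_comm
      _ ≤ ∑ y, √(L * r y / K) * √(outputDist p U y) :=
          sum_le_sum fun y _ => hp.sum_mul_abs_average_sub_outputDist_le
            (fun a => hU a y) (hLr y) (fun a => hUr a y) hK
      _ ≤ √(∑ y, L * r y / K) * √(∑ y, outputDist p U y) :=
          sum_sqrt_mul_sqrt_le _ (fun y => div_nonneg (hLr y) K.cast_nonneg)
            fun y => sum_nonneg fun a _ => mul_nonneg (hp.1 a) (hU a y)
      _ ≤ √(∑ y, L * r y / K) :=
          mul_le_of_le_one_right (sqrt_nonneg _) (sqrt_le_one.mpr hmass)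
      _ = √(L * (∑ y, r y) / K) := by rw [← sum_div, mul_sum]
  obtain ⟨c, hc, hcover⟩ := (IsPMF.pi fun _ : Fin K => hp).exists_le_of_sum_mul_le hmean
  exact ⟨c, fun i => prod_ne_zero_iff.mp hc i (mem_univ i), hcover⟩

/-- Truncating the channel where its density with respect to `r` exceeds `L` costs at most `τ` and
makes soft covering applicable. -/
lemma IsPMF.exists_codebook {q : A → ℝ} (hq : IsPMF q) {V : A → O → ℝ} (hV : IsChannel V)
    {r : O → ℝ} (hr : ∀ y, 0 ≤ r y) {L τ : ℝ} (hL : 0 ≤ L)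
    (hτ : ∀ a, q a ≠ 0 → ∑ y with L * r y < V a y, V a y ≤ τ) {K : ℕ} (hK : K ≠ 0) :
    ∃ e : Fin K → A, ∀ E : Finset O, (K : ℝ)⁻¹ * ∑ i, ∑ y ∈ E, V (e i) y ≤
      ∑ a, q a * ∑ y ∈ E, V a y + (τ + √(L * (∑ y, r y) / K)) := by
  have hb : ∀ y, 0 ≤ L * r y := fun y => mul_nonneg hL (hr y)
  set U := truncatedKernel V fun y => L * r y
  have hUV : ∀ a y, U a y ≤ V a y := truncatedKernel_le hV.1 _
  obtain ⟨e, he, hcover⟩ := hq.exists_soft_covering (truncatedKernel_nonneg hV.1 _)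
    (fun a => (sum_le_sum fun y _ => hUV a y).trans_eq (hV.2 a)) hr hL
    (truncatedKernel_le_bound V hb) hK
  refine ⟨e, fun E => ?_⟩
  have haverage : (K : ℝ)⁻¹ * ∑ i, ∑ y ∈ E, V (e i) y ≤
      (K : ℝ)⁻¹ * ∑ i, ∑ y ∈ E, U (e i) y + τ := by
    calc (K : ℝ)⁻¹ * ∑ i, ∑ y ∈ E, V (e i) y
        ≤ (K : ℝ)⁻¹ * ∑ i, (∑ y ∈ E, U (e i) y + τ) := by
          gcongr with i
          exact (sum_le_sum_truncatedKernel_add hV.1 _ _ E).trans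
            (add_le_add_right (hτ _ (he i)) _)
      _ = (K : ℝ)⁻¹ * ∑ i, ∑ y ∈ E, U (e i) y + τ := by
          rw [sum_add_distrib, mul_add]
          simp [hK]
  have hdeviation : (K : ℝ)⁻¹ * ∑ i, ∑ y ∈ E, U (e i) y - ∑ y ∈ E, outputDist q U y ≤
      √(L * (∑ y, r y) / K) := by
    rw [sum_comm, mul_sum, ← sum_sub_distrib]
    exact ((sum_le_sum fun y _ => le_abs_self _).trans
      (sum_le_univ_sum_of_nonneg fun y => abs_nonneg _)).trans hcover
  have houtput : ∑ y ∈ E, outputDist q U y ≤ ∑ a, q a * ∑ y ∈ E, V a y := by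
    rw [sum_outputDist]
    gcongr with a _ y
    exacts [hq.1 a, hUV a y]
  linarith

/-- The codebook simulates the output of `Q` conditioned on `S`, whence the division by `c`. -/
lemma IsPMF.exists_codebook_of_le_mass {Q : A → ℝ} (hQ : IsPMF Q) {V : A → O → ℝ}
    (hV : IsChannel V) {S : Finset A} {c : ℝ} (hc : 0 < c) (hQS : c ≤ ∑ a ∈ S, Q a)
    {r : O → ℝ} (hr : ∀ y, 0 ≤ r y) {L τ : ℝ} (hL : 0 ≤ L)
    (hτ : ∀ a ∈ S, ∑ y with L * r y < V a y, V a y ≤ τ) {K : ℕ} (hK : K ≠ 0) :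
    ∃ e : Fin K → A, ∀ E : Finset O, (K : ℝ)⁻¹ * ∑ i, ∑ y ∈ E, V (e i) y ≤
      (∑ a, Q a * ∑ y ∈ E, V a y) / c + (τ + √(L * (∑ y, r y) / K)) := by
  obtain ⟨q, hq, hqS, hqQ⟩ := hQ.exists_conditional hc hQS
  obtain ⟨e, he⟩ := hq.exists_codebook hV hr hL (fun a ha => hτ a (hqS a ha)) hK
  refine ⟨e, fun E => (he E).trans ?_⟩
  rw [sum_div]
  gcongr with a
  rw [← div_mul_eq_mul_div]
  exact mul_le_mul_of_nonneg_right (hqQ a) (sum_nonneg fun y _ => hV.1 a y)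

/-- Messages with large mass on `S` have pairwise different codebooks. -/
lemma card_heavy_messages_le {M : Type*} [Fintype M] [DecidableEq O] {V : A → O → ℝ}
    (hV : IsChannel V) {Q : M → A → ℝ} (hQ : ∀ m, IsPMF (Q m)) {D : M → Finset O} {l₁ l₂ : ℝ}
    (hmiss : ∀ m, ∑ a, Q m a * ∑ y ∈ (D m)ᶜ, V a y ≤ l₁)
    (hfalse : ∀ m m', m ≠ m' → ∑ a, Q m a * ∑ y ∈ D m', V a y ≤ l₂)
    {S : Finset A} {r : O → ℝ} (hr : ∀ y, 0 ≤ r y) {L τ : ℝ} (hL : 0 ≤ L)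
    (hτ : ∀ a ∈ S, ∑ y with L * r y < V a y, V a y ≤ τ) {K : ℕ} (hK : K ≠ 0) {c : ℝ}
    (hc : 0 < c) (hsmall : (l₁ + l₂) / c + 2 * (τ + √(L * (∑ y, r y) / K)) < 1) :
    #{m | c ≤ ∑ a ∈ S, Q m a} ≤ Fintype.card A ^ K := by
  choose e he using fun m : {m // c ≤ ∑ a ∈ S, Q m a} =>
    (hQ m).exists_codebook_of_le_mass hV hc m.2 hr hL hτ hK
  have hinj : Function.Injective e := by
    intro m m' hee
    by_contra hne
    have hne' : (m' : M) ≠ m := fun h => hne (Subtype.ext h.symm)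
    have hm := he m (D m)ᶜ
    have hm' := he m' (D m)
    have htotal : (K : ℝ)⁻¹ * ∑ i, ∑ y ∈ (D m)ᶜ, V (e m i) y +
        (K : ℝ)⁻¹ * ∑ i, ∑ y ∈ D m, V (e m i) y = 1 := by
      rw [← mul_add, ← sum_add_distrib]
      simp_rw [sum_compl_add_sum, hV.2]
      simp [hK]
    have hl₁ := div_le_div_of_nonneg_right (hmiss m) hc.le
    have hl₂ := div_le_div_of_nonneg_right (hfalse m' m hne') hc.le
    rw [← hee] at hm'
    rw [add_div] at hsmall
    linarith
  rw [← Fintype.card_subtype]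
  exact (Fintype.card_le_of_injective e hinj).trans_eq (by simp)

end OneShot

section InformationDensity

variable {X Y : Type*} [Fintype X] [Fintype Y] {P : X → ℝ} {W : X → Y → ℝ}

lemma IsPMF.outputDist (hP : IsPMF P) (hW : IsChannel W) : IsPMF (outputDist P W) := by
  refine ⟨fun y => sum_nonneg fun x _ => mul_nonneg (hP.1 x) (hW.1 x y), ?_⟩
  rw [sum_outputDist]
  simp_rw [hW.2, mul_one, hP.2]

lemma outputDist_pos (hP : IsPMF P) (hW : IsChannel W) {x : X} (hx : 0 < P x) {y : Y}
    (hxy : 0 < W x y) : 0 < outputDist P W y :=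
  sum_pos' (fun x' _ => mul_nonneg (hP.1 x') (hW.1 x' y)) ⟨x, mem_univ x, mul_pos hx hxy⟩

/-- The information density `log (W(y|x) / PW(y))`, whose mean under `P` and `W` is `I(P, W)`. Its
junk value `0` at `W(y|x) = 0` or `PW(y) = 0` carries no weight in the means taken below. -/
def infoDensity (P : X → ℝ) (W : X → Y → ℝ) (x : X) (y : Y) : ℝ :=
  log (W x y / outputDist P W y)

lemma mutInf_eq_sum_infoDensity (P : X → ℝ) (W : X → Y → ℝ) :
    mutInf P W = ∑ x, P x * ∑ y, W x y * infoDensity P W x y := by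
  simp_rw [mutInf, infoDensity, outputDist, mul_sum, ← mul_assoc]
  refine sum_congr rfl fun x _ => sum_congr rfl fun y _ => ?_
  split_ifs with h
  exacts [by rw [h, zero_mul], rfl]

lemma sub_le_mul_log_div {w q : ℝ} (hw : 0 ≤ w) (hq : 0 ≤ q) (hwq : 0 < w → 0 < q) :
    w - q ≤ w * log (w / q) := by
  rcases hw.eq_or_lt with rfl | hw
  · simpa using hq
  · have hq := hwq hw
    calc w - q = w * (1 - (w / q)⁻¹) := by field_simp
      _ ≤ w * log (w / q) :=
        mul_le_mul_of_nonneg_left (one_sub_inv_le_log_of_pos (div_pos hw hq)) hw.le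

lemma mutInf_nonneg (hP : IsPMF P) (hW : IsChannel W) : 0 ≤ mutInf P W := by
  have hq := hP.outputDist hW
  rw [mutInf_eq_sum_infoDensity]
  calc (0 : ℝ) = ∑ x, P x * ∑ y, (W x y - outputDist P W y) := by
        simp [sum_sub_distrib, hW.2, hq.2]
    _ ≤ ∑ x, P x * ∑ y, W x y * infoDensity P W x y := by
        refine sum_le_sum fun x _ => ?_
        rcases (hP.1 x).eq_or_lt with hx | hx
        · simp [← hx]
        · exact mul_le_mul_of_nonneg_left (sum_le_sum fun y _ => sub_le_mul_log_div (hW.1 x y)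
            (hq.1 y) (outputDist_pos hP hW hx)) hx.le

lemma mul_log_sq_le_four {t : ℝ} (h0 : 0 ≤ t) (h1 : t ≤ 1) : t * log t ^ 2 ≤ 4 := by
  rcases h0.eq_or_lt with rfl | hpos
  · simp
  have h := abs_log_mul_self_rpow_lt t (1 / 2) hpos h1 (by norm_num)
  have hsq : (log t * t ^ (1 / 2 : ℝ)) ^ 2 = t * log t ^ 2 := by
    rw [mul_pow, ← sqrt_eq_rpow, sq_sqrt h0, mul_comm]
  rw [← hsq, ← sq_abs]
  nlinarith [abs_nonneg (log t * t ^ (1 / 2 : ℝ))]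

lemma sum_infoDensity_sq_le (hP : IsPMF P) (hW : IsChannel W) :
    ∑ x, P x * ∑ y, W x y * infoDensity P W x y ^ 2 ≤ 16 * Fintype.card Y := by
  have hq := hP.outputDist hW
  have hpointwise : ∀ x y, P x * (W x y * infoDensity P W x y ^ 2) ≤
      P x * (2 * (W x y * log (W x y) ^ 2)) +
        2 * (P x * W x y * log (outputDist P W y) ^ 2) := by
    intro x y
    rcases (hP.1 x).eq_or_lt with hx | hx
    · simp [← hx]
    rcases (hW.1 x y).eq_or_lt with hy | hy
    · simp [← hy]
    rw [infoDensity, log_div hy.ne' (outputDist_pos hP hW hx hy).ne']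
    have h := mul_nonneg (mul_pos hx hy).le
      (sq_nonneg (log (W x y) + log (outputDist P W y)))
    linear_combination h
  have hchannel : ∑ x, P x * ∑ y, 2 * (W x y * log (W x y) ^ 2) ≤ 8 * Fintype.card Y := by
    calc ∑ x, P x * ∑ y, 2 * (W x y * log (W x y) ^ 2)
        ≤ ∑ x, P x * ∑ _y : Y, (8 : ℝ) := by
          gcongr with x _ y
          · exact hP.1 x
          · linarith [mul_log_sq_le_four (hW.1 x y) (IsPMF.le_one ⟨hW.1 x, hW.2 x⟩ y)]
      _ = 8 * Fintype.card Y := by rw [← sum_mul, hP.2]; simp [mul_comm]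
  have houtput : ∑ x, ∑ y, P x * W x y * log (outputDist P W y) ^ 2 ≤ 4 * Fintype.card Y := by
    rw [sum_comm]
    simp_rw [← sum_mul]
    calc ∑ y, outputDist P W y * log (outputDist P W y) ^ 2 ≤ ∑ _y : Y, (4 : ℝ) :=
          sum_le_sum fun y _ => mul_log_sq_le_four (hq.1 y) (hq.le_one y)
      _ = 4 * Fintype.card Y := by simp [mul_comm]
  calc ∑ x, P x * ∑ y, W x y * infoDensity P W x y ^ 2
      ≤ ∑ x, ∑ y, (P x * (2 * (W x y * log (W x y) ^ 2)) +
          2 * (P x * W x y * log (outputDist P W y) ^ 2)) := by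
        simp_rw [mul_sum]
        exact sum_le_sum fun x _ => sum_le_sum fun y _ => hpointwise x y
    _ = ∑ x, P x * ∑ y, 2 * (W x y * log (W x y) ^ 2) +
          2 * ∑ x, ∑ y, P x * W x y * log (outputDist P W y) ^ 2 := by
        simp_rw [sum_add_distrib, mul_sum]
    _ ≤ 16 * Fintype.card Y := by linarith

end InformationDensity

section Types

variable {X : Type*}

/-- The type (empirical distribution) of a sequence, the input distribution at which its information
densities are averaged. It is `0` rather than a distribution for `n = 0`. -/
def seqType {n : ℕ} (x : Fin n → X) (a : X) : ℝ :=
  (#{i | x i = a} : ℝ) / n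

lemma seqType_apply_pos {n : ℕ} (x : Fin n → X) (i : Fin n) : 0 < seqType x (x i) := by
  have hcard : 0 < #{j | x j = x i} := card_pos.mpr ⟨i, by simp⟩
  have hn : 0 < n := i.pos
  unfold seqType
  positivity

variable {Y : Type*} [Fintype Y] {W : X → Y → ℝ}

lemma isChannel_Wn (hW : IsChannel W) (n : ℕ) : IsChannel (Wn W n) := by
  have hpi : ∀ x : Fin n → X, IsPMF (Wn W n x) := fun x =>
    IsPMF.pi (p := fun i => W (x i)) fun i => ⟨hW.1 (x i), hW.2 (x i)⟩
  exact ⟨fun x => (hpi x).1, fun x => (hpi x).2⟩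

variable [Fintype X]

lemma sum_comp_eq_mul_sum_seqType {n : ℕ} (hn : n ≠ 0) (x : Fin n → X) (f : X → ℝ) :
    ∑ i, f (x i) = n * ∑ a, seqType x a * f a := by
  rw [← sum_fiberwise univ x, mul_sum]
  refine sum_congr rfl fun a _ => ?_
  rw [sum_congr rfl (g := fun _ => f a) (fun i hi => by rw [(mem_filter.mp hi).2]), sum_const,
    nsmul_eq_mul, seqType]
  field_simp

lemma isPMF_seqType {n : ℕ} (hn : n ≠ 0) (x : Fin n → X) : IsPMF (seqType x) := by
  refine ⟨fun a => by unfold seqType; positivity, ?_⟩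
  have h := sum_comp_eq_mul_sum_seqType hn x fun _ => 1
  simpa [hn] using h.symm

lemma card_image_seqType_le (n : ℕ) :
    #(univ.image (seqType : (Fin n → X) → X → ℝ)) ≤ (n + 1) ^ Fintype.card X := by
  calc #(univ.image (seqType : (Fin n → X) → X → ℝ))
      ≤ #(univ.image fun (c : X → Fin (n + 1)) (a : X) => ((c a : ℕ) : ℝ) / n) := by
        refine card_le_card fun P hP => ?_
        obtain ⟨x, -, rfl⟩ := mem_image.mp hP
        refine mem_image.mpr ⟨fun a => ⟨#{i | x i = a}, ?_⟩, mem_univ _, rfl⟩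
        exact Nat.lt_succ_of_le ((card_le_univ _).trans_eq (Fintype.card_fin n))
    _ ≤ #(univ : Finset (X → Fin (n + 1))) := card_image_le
    _ = (n + 1) ^ Fintype.card X := by simp

lemma outputDist_seqType_pos (hW : IsChannel W) {n : ℕ} {x : Fin n → X} {y : Fin n → Y}
    (hxy : 0 < Wn W n x y) (i : Fin n) : 0 < outputDist (seqType x) W (y i) :=
  outputDist_pos (isPMF_seqType i.pos.ne' x) hW (seqType_apply_pos x i)
    ((hW.1 _ _).lt_of_ne' (prod_ne_zero_iff.mp hxy.ne' i (mem_univ i)))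

lemma sum_infoDensity_eq_log (hW : IsChannel W) {n : ℕ} {x : Fin n → X} {y : Fin n → Y}
    (hxy : 0 < Wn W n x y) :
    ∑ i, infoDensity (seqType x) W (x i) (y i) =
      log (Wn W n x y / ∏ i, outputDist (seqType x) W (y i)) := by
  rw [Wn, ← prod_div_distrib, log_prod]
  · rfl
  · exact fun i hi => div_ne_zero (prod_ne_zero_iff.mp hxy.ne' i hi)
      (outputDist_seqType_pos hW hxy i).ne'

/-- As `seqType x` is the type of `x`, the information densities along `x` have total mean exactly
`n I(seqType x, W)`, and Chebyshev's inequality applies. -/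
lemma sum_Wn_lt_outputDist_seqType_le (hW : IsChannel W) {n : ℕ} (hn : n ≠ 0) {x : Fin n → X}
    {a γ : ℝ} (hγ : 0 < γ) (ha : mutInf (seqType x) W ≤ a) :
    ∑ y with exp (n * (a + γ)) * ∏ i, outputDist (seqType x) W (y i) < Wn W n x y, Wn W n x y ≤
      16 * Fintype.card Y / (n * γ ^ 2) := by
  have hP := isPMF_seqType hn x
  have hmean : ∑ i, ∑ b, W (x i) b * infoDensity (seqType x) W (x i) b =
      n * mutInf (seqType x) W := by
    rw [mutInf_eq_sum_infoDensity, ← sum_comp_eq_mul_sum_seqType hn x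
      fun a => ∑ b, W a b * infoDensity (seqType x) W a b]
  have hsecond : ∑ i, ∑ b, W (x i) b * infoDensity (seqType x) W (x i) b ^ 2 ≤
      n * (16 * Fintype.card Y) := by
    rw [sum_comp_eq_mul_sum_seqType hn x fun a => ∑ b, W a b * infoDensity (seqType x) W a b ^ 2]
    exact mul_le_mul_of_nonneg_left (sum_infoDensity_sq_le hP hW) n.cast_nonneg
  have hn' : (0 : ℝ) < n := by positivity
  refine (IsPMF.chebyshev_pi (p := fun i => W (x i)) (fun i => ⟨hW.1 (x i), hW.2 (x i)⟩)
    (fun i => infoDensity (seqType x) W (x i)) (mul_pos hn' hγ) fun y hy => ?_).trans ?_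
  · have hlt := (mem_filter.mp hy).2
    have hq : 0 ≤ ∏ i, outputDist (seqType x) W (y i) :=
      prod_nonneg fun i _ => (hP.outputDist hW).1 _
    have hxy : 0 < Wn W n x y := (mul_nonneg (exp_nonneg _) hq).trans_lt hlt
    have hq : 0 < ∏ i, outputDist (seqType x) W (y i) :=
      prod_pos fun i _ => outputDist_seqType_pos hW hxy i
    rw [hmean, sum_infoDensity_eq_log hW hxy]
    calc n * mutInf (seqType x) W + n * γ ≤ n * (a + γ) := by rw [mul_add]; gcongr
      _ ≤ log (Wn W n x y / ∏ i, outputDist (seqType x) W (y i)) :=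
        (le_log_iff_exp_le (div_pos hxy hq)).mpr ((le_div_iff₀ hq).mpr hlt.le)
  · calc (∑ i, ∑ b, W (x i) b * infoDensity (seqType x) W (x i) b ^ 2) / (n * γ) ^ 2
        ≤ n * (16 * Fintype.card Y) / (n * γ) ^ 2 := by gcongr
      _ = 16 * Fintype.card Y / (n * γ ^ 2) := by field_simp

/-- The sum over all types `P` of the `n`-fold product of the output distribution `PW`: a reference
measure of polynomial total mass which dominates the product output distribution of every type. -/
def typeMixture (W : X → Y → ℝ) (n : ℕ) (y : Fin n → Y) : ℝ :=
  ∑ P ∈ univ.image (seqType : (Fin n → X) → X → ℝ), ∏ i, outputDist P W (y i)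

lemma prod_outputDist_nonneg (hW : IsChannel W) {n : ℕ} {P : X → ℝ}
    (hP : P ∈ univ.image (seqType : (Fin n → X) → X → ℝ)) (y : Fin n → Y) :
    0 ≤ ∏ i, outputDist P W (y i) := by
  obtain ⟨x, -, rfl⟩ := mem_image.mp hP
  exact prod_nonneg fun i _ => ((isPMF_seqType i.pos.ne' x).outputDist hW).1 _

lemma typeMixture_nonneg (hW : IsChannel W) {n : ℕ} (y : Fin n → Y) : 0 ≤ typeMixture W n y :=
  sum_nonneg fun _ hP => prod_outputDist_nonneg hW hP y

lemma sum_typeMixture_le (hW : IsChannel W) {n : ℕ} (hn : n ≠ 0) :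
    ∑ y, typeMixture W n y ≤ (n + 1) ^ Fintype.card X := by
  simp_rw [typeMixture]
  rw [sum_comm]
  calc ∑ P ∈ univ.image (seqType : (Fin n → X) → X → ℝ), ∑ y : Fin n → Y, ∏ i, outputDist P W (y i)
      = #(univ.image (seqType : (Fin n → X) → X → ℝ)) := by
        rw [sum_congr rfl fun P hP => ?_, sum_const, nsmul_one]
        obtain ⟨x, -, rfl⟩ := mem_image.mp hP
        exact (IsPMF.pi fun _ => (isPMF_seqType hn x).outputDist hW).2
    _ ≤ (n + 1) ^ Fintype.card X := mod_cast card_image_seqType_le n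

lemma sum_Wn_lt_typeMixture_le (hW : IsChannel W) {n : ℕ} (hn : n ≠ 0) {x : Fin n → X} {a γ : ℝ}
    (hγ : 0 < γ) (ha : mutInf (seqType x) W ≤ a) :
    ∑ y with exp (n * (a + γ)) * typeMixture W n y < Wn W n x y, Wn W n x y ≤
      16 * Fintype.card Y / (n * γ ^ 2) := by
  refine le_trans (sum_le_sum_of_subset_of_nonneg (fun y hy => ?_) fun y _ _ =>
    (isChannel_Wn hW n).1 x y) (sum_Wn_lt_outputDist_seqType_le hW hn hγ ha)
  rw [mem_filter] at hy ⊢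
  refine ⟨mem_univ y, lt_of_le_of_lt ?_ hy.2⟩
  gcongr
  exact single_le_sum (f := fun P => ∏ i, outputDist P W (y i))
    (fun P hP => prod_outputDist_nonneg hW hP y) (mem_image_of_mem _ (mem_univ x))

end Types

section Asymptotics

lemma tendsto_succ_pow_mul_exp_neg (d : ℕ) {γ : ℝ} (hγ : 0 < γ) :
    Tendsto (fun n : ℕ => ((n : ℝ) + 1) ^ d * exp (-(n * γ))) atTop (𝓝 0) := by
  have hlt : |exp (-γ)| < 1 := by
    rw [abs_exp]
    exact exp_lt_one_iff.mpr (neg_lt_zero.mpr hγ)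
  have h := ((tendsto_add_atTop_iff_nat 1).mpr
    (tendsto_pow_const_mul_const_pow_of_abs_lt_one d hlt)).mul_const (exp γ)
  rw [zero_mul] at h
  refine h.congr fun n => ?_
  rw [← exp_nat_mul, mul_assoc, ← exp_add]
  push_cast
  congr 2
  ring

lemma natCast_pow_pow_le_exp (d n K : ℕ) : ((d : ℝ) ^ n) ^ K ≤ exp (d * n * K) := by
  calc ((d : ℝ) ^ n) ^ K ≤ (exp d ^ n) ^ K := by
        gcongr
        linarith [add_one_le_exp (d : ℝ)]
    _ = exp (d * n * K) := by
        rw [← exp_nat_mul, ← exp_nat_mul]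
        congr 1
        ring

lemma eventually_pow_pow_ceil_exp_le (d : ℕ) {s R δ : ℝ} (hs : 0 ≤ s) (hsR : s < R) (hδ : 0 < δ) :
    ∀ᶠ n : ℕ in atTop, (((d : ℝ) ^ n) ^ ⌈exp (n * s)⌉₊ : ℝ) ≤ δ * exp (exp (n * R)) := by
  have hexponent : ∀ᶠ n : ℕ in atTop, 2 * (d : ℝ) * ((n + 1) ^ 1 * exp (-(n * (R - s)))) < 1 / 2 :=
    ((tendsto_succ_pow_mul_exp_neg 1 (sub_pos.mpr hsR)).const_mul (2 * (d : ℝ))).eventually_lt_const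
      (by norm_num)
  have hE : Tendsto (fun n : ℕ => exp (n * R)) atTop atTop :=
    tendsto_exp_atTop.comp (tendsto_natCast_atTop_atTop.atTop_mul_const (hs.trans_lt hsR))
  have hprefactor : ∀ᶠ n : ℕ in atTop, exp (-(exp (n * R) / 2)) < δ :=
    (tendsto_exp_neg_atTop_nhds_zero.comp
      (hE.atTop_div_const two_pos)).eventually_lt_const hδ
  filter_upwards [hexponent, hprefactor] with n hexponent hprefactor
  have hceil : (⌈exp (n * s)⌉₊ : ℝ) ≤ 2 * exp (n * s) := by
    linarith [Nat.ceil_lt_add_one (exp_nonneg (n * s)), one_le_exp (mul_nonneg n.cast_nonneg hs)]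
  have hlog : (d * n * ⌈exp (n * s)⌉₊ : ℝ) ≤ exp (n * R) / 2 := by
    calc (d * n * ⌈exp (n * s)⌉₊ : ℝ) ≤ d * (n + 1) * (2 * exp (n * s)) := by
          gcongr
          linarith
      _ = 2 * d * ((n + 1) ^ 1 * exp (-(n * (R - s)))) * exp (n * R) := by
          rw [show (n : ℝ) * s = -(n * (R - s)) + n * R by ring, exp_add]
          ring
      _ ≤ 1 / 2 * exp (n * R) := by gcongr
      _ = exp (n * R) / 2 := by ring
  calc (((d : ℝ) ^ n) ^ ⌈exp (n * s)⌉₊ : ℝ) ≤ exp (d * n * ⌈exp (n * s)⌉₊) :=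
        natCast_pow_pow_le_exp d n _
    _ ≤ exp (-(exp (n * R) / 2) + exp (n * R)) := exp_le_exp.mpr (by linarith)
    _ ≤ δ * exp (exp (n * R)) := by
        rw [exp_add]
        gcongr

lemma eventually_covering_error_lt (b : ℝ) (d : ℕ) {γ δ : ℝ} (hγ : 0 < γ) (hδ : 0 < δ) :
    ∀ᶠ n : ℕ in atTop, b / (n * γ ^ 2) + √((n + 1) ^ d * exp (-(n * γ))) < δ := by
  have hdecay : Tendsto (fun n : ℕ => b / (n * γ ^ 2) + √((n + 1) ^ d * exp (-(n * γ))))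
      atTop (𝓝 (0 + √0)) :=
    ((tendsto_natCast_atTop_atTop.atTop_mul_const (pow_pos hγ 2)).const_div_atTop b).add
      (tendsto_succ_pow_mul_exp_neg d hγ).sqrt
  exact hdecay.eventually_lt_const (by simpa using hδ)

lemma average_le_add_card_div {M : Type*} [Fintype M] {f : M → ℝ} (hf : ∀ m, f m ≤ 1) {c : ℝ}
    (hc : 0 ≤ c) :
    (Fintype.card M : ℝ)⁻¹ * ∑ m, f m ≤ c + #{m | c ≤ f m} / Fintype.card M := by
  have hpointwise : ∀ m, f m ≤ c + if c ≤ f m then 1 else 0 := by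
    intro m
    split_ifs with h
    exacts [by linarith [hf m], by linarith]
  calc (Fintype.card M : ℝ)⁻¹ * ∑ m, f m
      ≤ (Fintype.card M : ℝ)⁻¹ * ∑ m, (c + if c ≤ f m then 1 else 0) := by
        gcongr with m
        exact hpointwise m
    _ = (Fintype.card M : ℝ)⁻¹ * Fintype.card M * c + #{m | c ≤ f m} / Fintype.card M := by
        rw [sum_add_distrib, sum_boole, sum_const, card_univ, nsmul_eq_mul]
        ring
    _ ≤ c + #{m | c ≤ f m} / Fintype.card M := by
        gcongr
        exact mul_le_of_le_one_left hc inv_mul_le_one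

variable {X Y : Type*} [Fintype X] [Fintype Y] {W : X → Y → ℝ}

lemma eventually_card_heavy_messages_le (hW : IsChannel W) {γ c l₁ l₂ : ℝ} (hγ : 0 < γ)
    (hc : 0 < c) (hl : l₁ + l₂ < c) :
    ∀ᶠ n : ℕ in atTop, ∀ (a : ℝ) (K : ℕ), exp (n * (a + 2 * γ)) ≤ K →
      ∀ (M : Type*) [Fintype M] (Q : M → (Fin n → X) → ℝ) (D : M → Finset (Fin n → Y)),
        IsIDCode n W Q D l₁ l₂ →
        #{m | c ≤ ∑ x with mutInf (seqType x) W ≤ a, Q m x} ≤ (Fintype.card X ^ n) ^ K := by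
  have hslack : 0 < (1 - (l₁ + l₂) / c) / 2 := half_pos (sub_pos.mpr ((div_lt_one hc).mpr hl))
  filter_upwards [eventually_ne_atTop 0, eventually_covering_error_lt (16 * Fintype.card Y)
    (Fintype.card X) hγ hslack] with n hn herror a K hK M _ Q D hcode
  have hKpos : (0 : ℝ) < K := (exp_pos _).trans_le hK
  have hcovering : exp (n * (a + γ)) * (∑ y, typeMixture W n y) / K ≤
      (n + 1) ^ Fintype.card X * exp (-(n * γ)) := by
    calc exp (n * (a + γ)) * (∑ y, typeMixture W n y) / K
        ≤ exp (n * (a + γ)) * (n + 1) ^ Fintype.card X / exp (n * (a + 2 * γ)) := by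
          gcongr
          exact sum_typeMixture_le hW hn
      _ = (n + 1) ^ Fintype.card X * exp (-(n * γ)) := by
          rw [mul_comm, mul_div_assoc, ← exp_sub]
          congr 2
          ring
  have hsmall : (l₁ + l₂) / c + 2 * (16 * Fintype.card Y / (n * γ ^ 2) +
      √(exp (n * (a + γ)) * (∑ y, typeMixture W n y) / K)) < 1 := by
    linarith [sqrt_le_sqrt hcovering]
  have hcard := card_heavy_messages_le (isChannel_Wn hW n) hcode.1 hcode.2.1 hcode.2.2
    (S := univ.filter fun x => mutInf (seqType x) W ≤ a) (typeMixture_nonneg hW)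
    (exp_nonneg (n * (a + γ)))
    (fun x hx => sum_Wn_lt_typeMixture_le hW hn hγ (mem_filter.mp hx).2)
    (Nat.cast_pos.mp hKpos).ne' hc hsmall
  rw [Fintype.card_fun, Fintype.card_fin] at hcard
  exact hcard

lemma eventually_uniformMixture_mass_le (hW : IsChannel W) {R ε c l₁ l₂ : ℝ} (hε : 0 < ε)
    (hl₀ : 0 ≤ l₁ + l₂) (hl : l₁ + l₂ < c) :
    ∀ᶠ n : ℕ in atTop,
      ∀ (M : Type*) [Fintype M] (Q : M → (Fin n → X) → ℝ) (D : M → Finset (Fin n → Y)),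
        exp (exp (n * R)) ≤ Fintype.card M → IsIDCode n W Q D l₁ l₂ →
        ∑ x with mutInf (seqType x) W ≤ R - ε, uniformMixture Q x ≤ c := by
  rcases lt_or_ge R ε with hR | hR
  · filter_upwards [eventually_ne_atTop 0] with n hn M _ Q D _ _
    rw [filter_false_of_mem fun x _ => not_le.mpr ((sub_neg.mpr hR).trans_le
      (mutInf_nonneg (isPMF_seqType hn x) hW)), sum_empty]
    exact hl₀.trans hl.le
  set c' := (l₁ + l₂ + c) / 2 with hc'
  have hc'pos : 0 < c' := by linarith
  filter_upwards [eventually_card_heavy_messages_le hW (γ := ε / 4) (by linarith) hc'pos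
      (show l₁ + l₂ < c' by linarith),
    eventually_pow_pow_ceil_exp_le (Fintype.card X) (s := R - ε / 2) (R := R) (by linarith)
      (by linarith) (sub_pos.mpr (show c' < c by linarith))]
    with n hheavy hnegligible M _ Q D hM hcode
  have hMpos : (0 : ℝ) < Fintype.card M := (exp_pos _).trans_le hM
  have hcard : (#{m | c' ≤ ∑ x with mutInf (seqType x) W ≤ R - ε, Q m x} : ℝ) ≤
      (c - c') * Fintype.card M := by
    calc (#{m | c' ≤ ∑ x with mutInf (seqType x) W ≤ R - ε, Q m x} : ℝ)
        ≤ ((Fintype.card X : ℝ) ^ n) ^ ⌈exp (n * (R - ε / 2))⌉₊ := by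
          refine mod_cast hheavy (R - ε) _ ?_ M Q D hcode
          rw [show R - ε + 2 * (ε / 4) = R - ε / 2 by ring]
          exact Nat.le_ceil _
      _ ≤ (c - c') * exp (exp (n * R)) := hnegligible
      _ ≤ (c - c') * Fintype.card M := by
          gcongr
          linarith
  rw [sum_uniformMixture]
  have haverage := average_le_add_card_div (fun m => (hcode.1 m).sum_le_one
    (univ.filter fun x => mutInf (seqType x) W ≤ R - ε)) hc'pos.le
  linarith [(div_le_iff₀ hMpos).mpr hcard]

end Asymptotics

section Broadcast

variable {X Y Z : Type*}

lemma isChannel_margY [Fintype Y] [Fintype Z] {W : X → Y → Z → ℝ} (hW : IsBC W) :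
    IsChannel (margY W) :=
  ⟨fun x y => sum_nonneg fun z _ => hW.1 x y z, hW.2⟩

lemma isChannel_margZ [Fintype Y] [Fintype Z] {W : X → Y → Z → ℝ} (hW : IsBC W) :
    IsChannel (margZ W) :=
  ⟨fun x z => sum_nonneg fun y _ => hW.1 x y z, fun x => sum_comm.trans (hW.2 x)⟩

lemma uniformMixture_prod_comm {ι κ μ A : Type*} [Fintype ι] [Fintype κ] [Fintype μ]
    (Q : ι → κ → μ → A → ℝ) :
    uniformMixture (fun p : ι × μ => uniformMixture fun j => Q p.1 j p.2) =
      uniformMixture fun p : ι × κ => uniformMixture (Q p.1 p.2) := by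
  ext a
  simp only [uniformMixture, ← mul_sum, Fintype.sum_prod_type, Fintype.card_prod, Nat.cast_mul]
  simp_rw [sum_comm (γ := κ)]
  ring

section Code

variable [Fintype X] [Fintype Y] [Fintype Z] {W : X → Y → Z → ℝ} {n k kY kZ : ℕ}
  {Q : Fin k → Fin kY → Fin kZ → (Fin n → X) → ℝ} {DY : Fin k → Fin kY → Finset (Fin n → Y)}
  {DZ : Fin k → Fin kZ → Finset (Fin n → Z)} {l1Y l2Y l1Z l2Z : ℝ}

lemma IsCMIDCode.isIDCode_margY [NeZero kZ] (h : IsCMIDCode n k kY kZ W Q DY DZ l1Y l2Y l1Z l2Z) :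
    IsIDCode n (margY W) (fun p : Fin k × Fin kY => uniformMixture (Q p.1 p.2))
      (fun p => DY p.1 p.2) l1Y l2Y := by
  refine ⟨fun p => IsPMF.uniformMixture (h.1 p.1 p.2), ?_⟩
  unfold uniformMixture
  simpa only [Fintype.card_fin] using h.2.1

lemma IsCMIDCode.isIDCode_margZ [NeZero kY] (h : IsCMIDCode n k kY kZ W Q DY DZ l1Y l2Y l1Z l2Z) :
    IsIDCode n (margZ W) (fun p : Fin k × Fin kZ => uniformMixture fun my => Q p.1 my p.2)
      (fun p => DZ p.1 p.2) l1Z l2Z := by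
  refine ⟨fun p => IsPMF.uniformMixture fun my => h.1 p.1 my p.2, ?_⟩
  unfold uniformMixture
  simpa only [Fintype.card_fin] using h.2.2

end Code

/-- Each receiver identifies a pair of messages, so only the sizes of the two sets of pairs
matter. -/
theorem bc_cm_id_strong_converse_general [Fintype X] [Fintype Y] [Fintype Z] {W : X → Y → Z → ℝ}
    (hW : IsBC W) {RY RZ ε l1Y l2Y l1Z l2Z : ℝ} (hε : 0 < ε)
    (hY : 0 ≤ l1Y + l2Y) (hZ : 0 ≤ l1Z + l2Z) (hsum : l1Y + l2Y + l1Z + l2Z < 1) :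
    ∀ᶠ n : ℕ in atTop, ∀ (k kY kZ : ℕ) (Q : Fin k → Fin kY → Fin kZ → (Fin n → X) → ℝ)
      (DY : Fin k → Fin kY → Finset (Fin n → Y)) (DZ : Fin k → Fin kZ → Finset (Fin n → Z)),
      exp (exp (n * RY)) ≤ k * kY → exp (exp (n * RZ)) ≤ k * kZ →
      IsCMIDCode n k kY kZ W Q DY DZ l1Y l2Y l1Z l2Z →
      ∃ P : X → ℝ, IsPMF P ∧ RY < mutInf P (margY W) + ε ∧ RZ < mutInf P (margZ W) + ε := by
  obtain ⟨cY, hcY, hcYZ⟩ : ∃ cY, l1Y + l2Y < cY ∧ cY < 1 - (l1Z + l2Z) :=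
    exists_between (by linarith)
  obtain ⟨cZ, hcZ, hcsum⟩ := exists_between (lt_sub_comm.mp hcYZ)
  filter_upwards [eventually_ne_atTop 0,
    eventually_uniformMixture_mass_le (isChannel_margY hW) hε hY hcY,
    eventually_uniformMixture_mass_le (isChannel_margZ hW) hε hZ hcZ]
    with n hn hbadY hbadZ k kY kZ Q DY DZ hkY hkZ hcode
  have hkkY : k * kY ≠ 0 := mod_cast ((exp_pos _).trans_le hkY).ne'
  have hkkZ : k * kZ ≠ 0 := mod_cast ((exp_pos _).trans_le hkZ).ne'
  have : NeZero k := ⟨left_ne_zero_of_mul hkkY⟩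
  have : NeZero kY := ⟨right_ne_zero_of_mul hkkY⟩
  have : NeZero kZ := ⟨right_ne_zero_of_mul hkkZ⟩
  have hmassY := hbadY _ _ _ (by simpa using hkY) hcode.isIDCode_margY
  have hmassZ := hbadZ _ _ _ (by simpa using hkZ) hcode.isIDCode_margZ
  rw [uniformMixture_prod_comm] at hmassZ
  obtain ⟨x, hxY, hxZ⟩ := (IsPMF.uniformMixture hcode.isIDCode_margY.1).exists_notMem_notMem
    ((add_le_add hmassY hmassZ).trans_lt (lt_sub_iff_add_lt'.mp hcsum))
  simp only [mem_filter, mem_univ, true_and, not_le] at hxY hxZ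
  exact ⟨seqType x, isPMF_seqType hn x, sub_lt_iff_lt_add.mp hxY, sub_lt_iff_lt_add.mp hxZ⟩

end Broadcast

lemma exp_exp_mul_max_le {n R R' k k' : ℝ} (hk : exp (exp (n * R)) ≤ k)
    (hk' : exp (exp (n * R')) ≤ k') : exp (exp (n * max R R')) ≤ k * k' := by
  have hone : ∀ {r s : ℝ}, exp (exp r) ≤ s → 1 ≤ s := (one_le_exp (exp_nonneg _)).trans
  rcases max_choice R R' with h | h <;> rw [h]
  · exact hk.trans (le_mul_of_one_le_right (zero_le_one.trans (hone hk)) (hone hk'))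
  · exact hk'.trans (le_mul_of_one_le_left (zero_le_one.trans (hone hk')) (hone hk))

/-- **Claim 7.** Strong converse for the BC with a common
message. -/
theorem bc_cm_id_strong_converse
    {X Y Z : Type} [Fintype X] [Fintype Y] [Fintype Z]
    [Nonempty X] [Nonempty Y] [Nonempty Z]
    (W : X → Y → Z → ℝ) (hW : IsBC W)
    (R RY RZ : ℝ) (hR : 0 ≤ R) (hRY : 0 ≤ RY) (hRZ : 0 ≤ RZ)
    (l1Y l2Y l1Z l2Z : ℝ)
    (h1Y : 0 < l1Y) (h2Y : 0 < l2Y) (h1Z : 0 < l1Z) (h2Z : 0 < l2Z)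
    (hsum : l1Y + l2Y + l1Z + l2Z < 1)
    (ε : ℝ) (hε : 0 < ε) :
    ∃ η₀ : ℕ, ∀ n : ℕ, η₀ ≤ n →
      ∀ k kY kZ : ℕ,
        k = Nat.ceil (Real.exp (Real.exp (n * R))) →
        kY = Nat.ceil (Real.exp (Real.exp (n * RY))) →
        kZ = Nat.ceil (Real.exp (Real.exp (n * RZ))) →
        ∀ (Q : Fin k → Fin kY → Fin kZ → (Fin n → X) → ℝ)
          (DY : Fin k → Fin kY → Finset (Fin n → Y))
          (DZ : Fin k → Fin kZ → Finset (Fin n → Z)),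
          IsCMIDCode n k kY kZ W Q DY DZ l1Y l2Y l1Z l2Z →
          ∃ P : X → ℝ, IsPMF P ∧
            R < mutInf P (margY W) + ε ∧
            RY < mutInf P (margY W) + ε ∧
            R < mutInf P (margZ W) + ε ∧
            RZ < mutInf P (margZ W) + ε := by
  obtain ⟨η₀, hη₀⟩ := eventually_atTop.mp <| bc_cm_id_strong_converse_general hW
    (RY := max R RY) (RZ := max R RZ) hε (add_pos h1Y h2Y).le (add_pos h1Z h2Z).le hsum
  refine ⟨η₀, ?_⟩
  rintro n hn k kY kZ rfl rfl rfl Q DY DZ hcode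
  obtain ⟨P, hP, hIY, hIZ⟩ := hη₀ n hn _ _ _ Q DY DZ
    (exp_exp_mul_max_le (Nat.le_ceil _) (Nat.le_ceil _))
    (exp_exp_mul_max_le (Nat.le_ceil _) (Nat.le_ceil _)) hcode
  exact ⟨P, hP, (le_max_left _ _).trans_lt hIY, (le_max_right _ _).trans_lt hIY,
    (le_max_left _ _).trans_lt hIZ, (le_max_right _ _).trans_lt hIZ⟩
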